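/- If G is a graph with arboricity at most α, where α ≥ 2 is an integer, then |L(G)| ≤ (α+1)ν(G). -/

import Mathlib

/-- A graph has arboricity at most `a` if its edge set can be covered by `a`
forests. -/
def SimpleGraph.ArboricityLE {V : Type*} (G : SimpleGraph V) (a : ℕ) : Prop :=
  ∃ F : Fin a → SimpleGraph V, (∀ i, F i ≤ G) ∧ (∀ i, (F i).IsAcyclic) ∧
    ∀ u v : V, G.Adj u v → ∃ i, (F i).Adj u v

open Finset in
lemma aux_forest {W : Type*} [Fintype W] (H : SimpleGraph W) (hH : H.IsAcyclic) :
    Nat.card H.edgeSet ≤ Nat.card W := by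
  classical
  rcases isEmpty_or_nonempty W with hW | hW
  · have : IsEmpty H.edgeSet := ⟨fun ⟨e, he⟩ => by
      induction e with
      | _ a b => exact hW.elim a⟩
    simp
  obtain ⟨T, hT, hm⟩ := Set.Finite.exists_le_maximal
    (s := {H : SimpleGraph W | H.IsAcyclic}) (Set.toFinite _) hH
  have hTT : T.IsTree := SimpleGraph.isTree_iff_maximal_isAcyclic.2 ⟨hW, hm⟩
  have h1 := hTT.card_edgeFinset
  have h2 : Nat.card H.edgeSet ≤ Nat.card T.edgeSet :=
    Nat.card_mono (Set.toFinite _) (SimpleGraph.edgeSet_mono hT)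
  rw [Nat.card_eq_fintype_card (α := T.edgeSet), ← SimpleGraph.edgeFinset_card] at h2
  rw [Nat.card_eq_fintype_card (α := W)]
  omega

open Finset Classical in
lemma aux_bip {V : Type*} [Fintype V] (H : SimpleGraph V) (hH : H.IsAcyclic)
    (B A : Finset V) (hd : Disjoint B A) :
    #{p ∈ B ×ˢ A | H.Adj p.1 p.2} ≤ #B + #A := by
  let W : Set V := ↑(B ∪ A)
  have h1 := aux_forest (H.induce W) (hH.induce W)
  have hW : Nat.card W = #B + #A := by
    rw [← card_union_of_disjoint hd]
    simp [W]
  rw [hW] at h1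
  refine le_trans ?_ h1
  let φ : (V × V) → Sym2 V := fun p => s(p.1, p.2)
  have hinj : Function.Injective (Sym2.map (Subtype.val : W → V)) :=
    Sym2.map.injective Subtype.val_injective
  have h2 : #{p ∈ B ×ˢ A | H.Adj p.1 p.2} ≤
      (Sym2.map (Subtype.val : W → V) '' (H.induce W).edgeSet).ncard := by
    rw [← Set.ncard_coe_finset]
    refine Set.ncard_le_ncard_of_injOn φ ?_ ?_ (Set.toFinite _)
    · rintro ⟨u, v⟩ h
      simp only [coe_filter, mem_product, Set.mem_setOf_eq] at h
      refine ⟨s(⟨u, by simp [W, h.1.1]⟩, ⟨v, by simp [W, h.1.2]⟩), ?_, rfl⟩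
      exact h.2
    · rintro ⟨u, v⟩ h ⟨u', v'⟩ h' he
      simp only [coe_filter, mem_product, Set.mem_setOf_eq] at h h'
      simp only [φ, Sym2.eq_iff] at he
      rcases he with ⟨rfl, rfl⟩ | ⟨rfl, rfl⟩
      · rfl
      · exact (disjoint_left.1 hd h.1.1 h'.1.2).elim
  rw [Set.ncard_image_of_injective _ hinj] at h2
  exact h2

open Finset Classical in
lemma aux_hall {V : Type*} (s : Finset V) (t : V → Finset V)
    (h : ∀ T ⊆ s, #T ≤ #(T.biUnion t)) :
    ∃ f : V → V, Set.InjOn f s ∧ ∀ x ∈ s, f x ∈ t x := by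
  obtain ⟨f, hf, hft⟩ := (Finset.all_card_le_biUnion_card_iff_exists_injective
    (fun x : s => t x)).1 (fun T => by
      have := h (T.map (Function.Embedding.subtype _)) (by
        intro x; simp only [mem_map]; rintro ⟨y, -, rfl⟩; exact y.2)
      rw [card_map] at this
      refine this.trans (card_le_card ?_)
      intro x
      simp)
  refine ⟨fun x => if hx : x ∈ s then f ⟨x, hx⟩ else x, ?_, ?_⟩
  · intro x hx y hy hxy
    simp only [mem_coe] at hx hy
    simp only [hx, hy, dif_pos] at hxy
    simpa using hf hxy
  · intro x hx
    simp only [hx, dif_pos]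
    exact hft ⟨x, hx⟩

open Finset Classical in
lemma aux_match {V : Type*} [Fintype V] (G : SimpleGraph V) (P : Finset V) (g : V → V)
    (hi : Set.InjOn g P) (ha : ∀ v ∈ P, G.Adj v (g v)) (hn : ∀ v ∈ P, g v ∉ P) :
    ∃ M : G.Subgraph, M.IsMatching ∧ #P ≤ M.edgeSet.ncard := by
  let M : G.Subgraph :=
    { verts := {v | v ∈ P ∨ ∃ u ∈ P, g u = v}
      Adj := fun u v => (u ∈ P ∧ g u = v) ∨ (v ∈ P ∧ g v = u)
      adj_sub := by
        rintro u v (⟨h, rfl⟩ | ⟨h, rfl⟩)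
        · exact ha _ h
        · exact (ha _ h).symm
      edge_vert := by
        rintro u v (⟨h, rfl⟩ | ⟨h, rfl⟩)
        · exact Or.inl h
        · exact Or.inr ⟨_, h, rfl⟩
      symm := ⟨by
        rintro u v (h | h)
        · exact Or.inr h
        · exact Or.inl h⟩ }
  refine ⟨M, ?_, ?_⟩
  · rintro v (hv | ⟨u, hu, rfl⟩)
    · refine ⟨g v, Or.inl ⟨hv, rfl⟩, ?_⟩
      rintro w (⟨h, rfl⟩ | ⟨h, rfl⟩)
      · rfl
      · exact absurd hv (hn _ h)
    · refine ⟨u, Or.inr ⟨hu, rfl⟩, ?_⟩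
      rintro w (⟨h, rfl⟩ | ⟨h, h'⟩)
      · exact absurd h (hn _ hu)
      · exact hi h hu h'
  · rw [← Set.ncard_coe_finset]
    refine Set.ncard_le_ncard_of_injOn (fun v => s(v, g v)) ?_ ?_ (Set.toFinite _)
    · intro v hv
      exact Or.inl ⟨hv, rfl⟩
    · intro u hu v hv huv
      simp only [Sym2.eq_iff] at huv
      rcases huv with h | h
      · exact h.1
      · exact absurd (h.2 ▸ hv : g u ∈ (P : Set V)) (by simpa [h.2] using hn u hu)

open Finset Classical in
lemma aux_three {V : Type*} [Fintype V] (R : Finset V) (g : V → V)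
    (hi : Set.InjOn g R) (hR : ∀ v ∈ R, g v ∈ R) (hn : ∀ v ∈ R, g v ≠ v) :
    ∃ X ⊆ R, (∀ v ∈ X, g v ∉ X) ∧ #R ≤ 3 * #X := by
  obtain ⟨X, hX, hmax⟩ := Finset.exists_max_image
    (R.powerset.filter (fun X => ∀ v ∈ X, g v ∉ X)) card ⟨∅, by simp⟩
  simp only [mem_filter, mem_powerset] at hX hmax
  refine ⟨X, hX.1, hX.2, ?_⟩
  have hsub : R ⊆ (X ∪ X.image g) ∪ R.filter (fun v => g v ∈ X) := by
    intro v hv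
    by_contra hc
    simp only [mem_union, mem_image, mem_filter, not_or, not_exists, not_and] at hc
    obtain ⟨⟨h1, h2⟩, h3⟩ := hc
    have := hmax (insert v X) ⟨insert_subset hv hX.1, by
      intro u hu hgu
      rw [mem_insert] at hu hgu
      rcases hu with rfl | hu <;> rcases hgu with h | h
      · exact hn _ hv h
      · exact h3 hv h
      · exact h2 u hu h
      · exact hX.2 u hu h⟩
    rw [card_insert_of_notMem h1] at this
    omega
  have h1 := card_le_card hsub
  have h2 := card_union_le (X ∪ X.image g) (R.filter (fun v => g v ∈ X))
  have h3 := card_union_le X (X.image g)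
  have h4 : #(X.image g) ≤ #X := card_image_le
  have h5 : #(R.filter (fun v => g v ∈ X)) ≤ #X := by
    refine card_le_card_of_injOn g ?_ ?_
    · intro v hv
      exact (mem_filter.1 hv).2
    · intro u hu v hv
      exact hi (mem_filter.1 hu).1 (mem_filter.1 hv).1
  omega

open Finset Classical in
lemma aux_struct {V : Type*} [Fintype V] (G : SimpleGraph V) :
    ∃ S A R : Finset V, (∀ u ∈ S, ∀ v, G.Adj u v → v ∈ A) ∧ (∀ v, v ∈ S ∨ v ∈ A ∨ v ∈ R) ∧
      Disjoint S A ∧ Disjoint S R ∧ Disjoint A R ∧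
      (∃ f : V → V, Set.InjOn f A ∧ ∀ v ∈ A, f v ∈ S ∧ G.Adj v (f v)) ∧
      (∃ g : V → V, Set.InjOn g R ∧ ∀ v ∈ R, g v ∈ R ∧ G.Adj v (g v)) := by
  let N : Finset V → Finset V := fun S => univ.filter (fun v => ∃ u ∈ S, G.Adj u v)
  have hN : ∀ S v, v ∈ N S ↔ ∃ u ∈ S, G.Adj u v := by simp [N]
  obtain ⟨S₀, -, hmax₀⟩ := Finset.exists_max_image (univ : Finset (Finset V))
    (fun S => (#S : ℤ) - #(N S)) ⟨∅, by simp⟩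
  obtain ⟨S, hind, hmax⟩ : ∃ S, Disjoint S (N S) ∧ ∀ T, (#T : ℤ) - #(N T) ≤ #S - #(N S) := by
    refine ⟨S₀ \ N S₀, ?_, fun T => (hmax₀ T (mem_univ _)).trans ?_⟩
    · rw [disjoint_left]
      intro v hv hv'
      obtain ⟨u, hu, huv⟩ := (hN _ _).1 hv'
      rw [mem_sdiff] at hu hv
      exact hv.2 ((hN _ _).2 ⟨u, hu.1, huv⟩)
    · have hsub : N (S₀ \ N S₀) ⊆ N S₀ \ S₀ := by
        intro v hv
        obtain ⟨u, hu, huv⟩ := (hN _ _).1 hv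
        rw [mem_sdiff] at hu ⊢
        exact ⟨(hN _ _).2 ⟨u, hu.1, huv⟩, fun h => hu.2 ((hN _ _).2 ⟨v, h, huv.symm⟩)⟩
      have h1 := card_le_card hsub
      have h2 := card_sdiff_add_card_inter (N S₀) S₀
      have h3 := card_sdiff_add_card_inter S₀ (N S₀)
      rw [inter_comm] at h3
      omega
  refine ⟨S, N S, (S ∪ N S)ᶜ, fun u hu v h => (hN _ _).2 ⟨u, hu, h⟩, ?_, hind, ?_, ?_, ?_, ?_⟩
  · intro v
    simp only [mem_compl, mem_union]
    tauto
  · rw [disjoint_left]; intro v hv; simp [hv]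
  · rw [disjoint_left]; intro v hv; simp [hv]
  · obtain ⟨f, hf, hf'⟩ := aux_hall (N S) (fun v => S.filter (fun u => G.Adj v u)) (by
      intro T hT
      set Q := T.biUnion (fun v => S.filter (fun u => G.Adj v u)) with hQ
      have hQS : Q ⊆ S := by
        intro x hx
        simp only [hQ, mem_biUnion, mem_filter] at hx
        obtain ⟨_, _, h, _⟩ := hx
        exact h
      have hsub : N (S \ Q) ⊆ N S \ T := by
        intro v hv
        obtain ⟨u, hu, huv⟩ := (hN _ _).1 hv
        rw [mem_sdiff] at hu ⊢
        refine ⟨(hN _ _).2 ⟨u, hu.1, huv⟩, fun h => hu.2 ?_⟩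
        simp only [hQ, mem_biUnion, mem_filter]
        exact ⟨v, h, hu.1, huv.symm⟩
      have h1 := card_le_card hsub
      have h2 := card_sdiff_add_card_eq_card hT
      have h3 := card_sdiff_add_card_eq_card hQS
      have h4 := hmax (S \ Q)
      omega)
    exact ⟨f, hf, fun v hv => by simpa using hf' v hv⟩
  · obtain ⟨f, hf, hf'⟩ := aux_hall ((S ∪ N S)ᶜ) (fun v => ((S ∪ N S)ᶜ).filter (fun u => G.Adj v u)) (by
      intro T hT
      set Q := T.biUnion (fun v => ((S ∪ N S)ᶜ).filter (fun u => G.Adj v u)) with hQ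
      have hTS : Disjoint S T := by
        rw [disjoint_left]
        intro v hv hv'
        have := hT hv'
        simp [hv] at this
      have hsub : N (S ∪ T) ⊆ N S ∪ Q := by
        intro v hv
        obtain ⟨u, hu, huv⟩ := (hN _ _).1 hv
        rw [mem_union] at hu ⊢
        by_cases hvN : v ∈ N S
        · exact Or.inl hvN
        refine Or.inr ?_
        rcases hu with hu | hu
        · exact absurd ((hN _ _).2 ⟨u, hu, huv⟩) hvN
        simp only [hQ, mem_biUnion, mem_filter]
        refine ⟨u, hu, ?_, huv⟩
        rw [mem_compl, mem_union, not_or]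
        refine ⟨fun h => ?_, hvN⟩
        have h1 := hT hu
        rw [mem_compl, mem_union, not_or] at h1
        exact h1.2 ((hN _ _).2 ⟨v, h, huv.symm⟩)
      have h1 := card_le_card hsub
      have h2 := card_union_of_disjoint hTS
      have h3 := card_union_le (N S) Q
      have h4 := hmax (S ∪ T)
      omega)
    exact ⟨f, hf, fun v hv => mem_filter.1 (hf' v hv)⟩

open Finset Classical in
lemma aux_indep {V : Type*} [Fintype V] (G : SimpleGraph V) [DecidableRel G.Adj] (α : ℕ)
    (harb : G.ArboricityLE α) (S A : Finset V) (hSA : ∀ u ∈ S, ∀ v, G.Adj u v → v ∈ A)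
    (hd : Disjoint S A) :
    #(S.filter (fun v => ∃ w, G.Adj v w ∧ G.degree w ≤ G.degree v)) ≤ α * #A := by
  obtain ⟨F, hFG, hF, hcov⟩ := harb
  let A1 := A.filter (fun w => G.degree w ≤ α)
  let A2 := A.filter (fun w => ¬ G.degree w ≤ α)
  have hA : #A1 + #A2 = #A := card_filter_add_card_filter_not _
  let B := S.filter (fun v => (∃ w, G.Adj v w ∧ G.degree w ≤ G.degree v) ∧ ∀ w ∈ A1, ¬ G.Adj v w)
  have hsub : S.filter (fun v => ∃ w, G.Adj v w ∧ G.degree w ≤ G.degree v) ⊆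
      A1.biUnion (fun w => G.neighborFinset w) ∪ B := by
    intro v hv
    rw [mem_filter] at hv
    rw [mem_union]
    by_cases h : ∀ w ∈ A1, ¬ G.Adj v w
    · exact Or.inr (mem_filter.2 ⟨hv.1, hv.2, h⟩)
    · push Not at h
      obtain ⟨w, hw, hvw⟩ := h
      refine Or.inl (mem_biUnion.2 ⟨w, hw, ?_⟩)
      simpa using hvw.symm
  have h1 : #(A1.biUnion (fun w => G.neighborFinset w)) ≤ #A1 * α :=
    card_biUnion_le_card_mul _ _ _ (fun w hw => by
      rw [SimpleGraph.card_neighborFinset_eq_degree]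
      exact (mem_filter.1 hw).2)
  have hnb : ∀ v ∈ B, ∀ w, G.Adj v w → w ∈ A2 := by
    intro v hv w hvw
    obtain ⟨hvS, -, hno⟩ := mem_filter.1 hv
    have hwA := hSA v hvS w hvw
    refine mem_filter.2 ⟨hwA, fun h => hno w (mem_filter.2 ⟨hwA, h⟩) hvw⟩
  have hdeg : ∀ v ∈ B, α + 1 ≤ G.degree v := by
    intro v hv
    obtain ⟨hvS, ⟨w, hvw, hle⟩, -⟩ := mem_filter.1 hv
    have := (mem_filter.1 (hnb v hv w hvw)).2
    omega
  have hBA : Disjoint B A2 := disjoint_of_subset_left (filter_subset _ _)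
    (disjoint_of_subset_right (filter_subset _ _) hd)
  have hlow : #B * (α + 1) ≤ #((B ×ˢ A2).filter (fun p => G.Adj p.1 p.2)) := by
    calc #B * (α + 1) ≤ ∑ v ∈ B, G.degree v := by
          simpa using card_nsmul_le_sum B _ _ hdeg
      _ = #(B.sigma (fun v => G.neighborFinset v)) := by simp [card_sigma]
      _ ≤ _ := by
          refine card_le_card_of_injOn (fun p => (p.1, p.2)) ?_ ?_
          · rintro ⟨v, w⟩ h
            simp only [coe_sigma, Set.mem_sigma_iff, mem_coe, SimpleGraph.mem_neighborFinset] at h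
            simp only [coe_filter, mem_product, Set.mem_setOf_eq]
            exact ⟨⟨h.1, hnb v h.1 w h.2⟩, h.2⟩
          · rintro ⟨v, w⟩ - ⟨v', w'⟩ - h
            simp only [Prod.mk.injEq] at h
            obtain ⟨rfl, rfl⟩ := h
            rfl
  have hup : #((B ×ˢ A2).filter (fun p => G.Adj p.1 p.2)) ≤ α * (#B + #A2) := by
    have : (B ×ˢ A2).filter (fun p => G.Adj p.1 p.2) ⊆
        (univ : Finset (Fin α)).biUnion (fun i => {p ∈ B ×ˢ A2 | (F i).Adj p.1 p.2}) := by
      intro p hp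
      rw [mem_filter] at hp
      obtain ⟨i, hi⟩ := hcov _ _ hp.2
      exact mem_biUnion.2 ⟨i, mem_univ _, mem_filter.2 ⟨hp.1, hi⟩⟩
    refine (card_le_card this).trans ?_
    have := card_biUnion_le_card_mul (univ : Finset (Fin α))
      (fun i => {p ∈ B ×ˢ A2 | (F i).Adj p.1 p.2}) (#B + #A2)
      (fun i _ => aux_bip (F i) (hF i) B A2 hBA)
    simpa using this
  have h2 := card_le_card hsub
  have h3 := card_union_le (A1.biUnion (fun w => G.neighborFinset w)) B
  rw [← hA]
  nlinarith

/-- If `G` has arboricity at most `α` with `α ≥ 2`, then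
`|L(G)| ≤ (α+1)ν(G)`. -/
theorem locally_superior_le_matching_of_arboricity {V : Type*} [Fintype V]
    (G : SimpleGraph V) [DecidableRel G.Adj] (α : ℕ) (hα : 2 ≤ α)
    (harb : G.ArboricityLE α) :
    ∃ M : G.Subgraph, M.IsMatching ∧
      ({v : V | ∃ w, G.Adj v w ∧ G.degree w ≤ G.degree v} : Set V).ncard ≤
        (α + 1) * M.edgeSet.ncard := by
  classical
  obtain ⟨S, A, R, hSA, hcov, hdSA, hdSR, hdAR, ⟨f, hfi, hf⟩, ⟨g, hgi, hg⟩⟩ := aux_struct G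
  have hL := aux_indep G α harb S A hSA hdSA
  obtain ⟨X, hXR, hX, hcard⟩ := aux_three R g hgi (fun v hv => (hg v hv).1)
    (fun v hv => (hg v hv).2.ne')
  rw [Finset.disjoint_left] at hdSA hdSR hdAR
  have hdAX : Disjoint A X := by
    rw [Finset.disjoint_left]
    exact fun v hv hv' => hdAR hv (hXR hv')
  obtain ⟨M, hM, hMc⟩ := aux_match G (A ∪ X) (fun v => if v ∈ A then f v else g v)
    (by
      intro u hu v hv huv
      simp only [Finset.coe_union, Set.mem_union, Finset.mem_coe] at hu hv
      by_cases huA : u ∈ A <;> by_cases hvA : v ∈ A <;>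
        simp only [huA, hvA, if_true, if_false, true_or, false_or] at huv hu hv
      · exact hfi huA hvA huv
      · exact (hdSR (hf u huA).1 (huv ▸ (hg v (hXR hv)).1)).elim
      · exact (hdSR (hf v hvA).1 (huv ▸ (hg u (hXR hu)).1)).elim
      · exact hgi (hXR hu) (hXR hv) huv)
    (by
      intro v hv
      rw [Finset.mem_union] at hv
      by_cases hvA : v ∈ A <;> simp only [hvA, if_true, if_false, true_or, false_or] at hv ⊢
      · exact (hf v hvA).2
      · exact (hg v (hXR hv)).2)
    (by
      intro v hv
      rw [Finset.mem_union] at hv ⊢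
      by_cases hvA : v ∈ A <;> simp only [hvA, if_true, if_false, true_or, false_or] at hv ⊢
      · rintro (h | h)
        · exact hdSA (hf v hvA).1 h
        · exact hdSR (hf v hvA).1 (hXR h)
      · rintro (h | h)
        · exact hdAR h (hg v (hXR hv)).1
        · exact hX v hv h)
  refine ⟨M, hM, ?_⟩
  have hsub : ({v : V | ∃ w, G.Adj v w ∧ G.degree w ≤ G.degree v} : Set V) ⊆
      ↑((A ∪ R) ∪ S.filter (fun v => ∃ w, G.Adj v w ∧ G.degree w ≤ G.degree v)) := by
    intro v hv
    simp only [Set.mem_setOf_eq] at hv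
    simp only [Finset.coe_union, Finset.coe_filter, Set.mem_union, Finset.mem_coe,
      Set.mem_setOf_eq]
    rcases hcov v with h | h | h
    · exact Or.inr ⟨h, hv⟩
    · exact Or.inl (Or.inl h)
    · exact Or.inl (Or.inr h)
  have h1 := Set.ncard_le_ncard hsub (Set.toFinite _)
  rw [Set.ncard_coe_finset] at h1
  have h2 := Finset.card_union_le (A ∪ R)
    (S.filter (fun v => ∃ w, G.Adj v w ∧ G.degree w ≤ G.degree v))
  have h3 := Finset.card_union_le A R
  rw [Finset.card_union_of_disjoint hdAX] at hMc
  have h4 : (α + 1) * (A.card + X.card) ≤ (α + 1) * M.edgeSet.ncard := Nat.mul_le_mul_left _ hMc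
  nlinarith [Nat.mul_le_mul_right X.card hα]
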